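/- Let K be a local field with residue field 𝔽_q, B an n²-central division K-algebra, L ⊆ B a division subalgebra with e' = e(B/L) and f = f(L/K), and C the centralizer of L. In the full rose FR(L) (the portion of the branch S(O_L) above a node of the subtree associated to C, consisting of vertices of levels 0 through e'), every vertex whose level is a positive multiple of f is a node, and no vertex whose level is not a multiple of f is a node; moreover each element of the residue field 𝔹 of B lifts to an element of the centralizer ℂ_{e'} of the image of O_L in O_B/m_B^{e'}. Hence FR(L) is the largest possible (q^n − q^{e'}, e')-rose having nodes only at vertices whose distance to the center is divisible by f. -/

import Mathlib

/-!
Conjugation by `π_B` induces an automorphism `σ` of the residue field `𝔹` over the residue field of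
the centre `K`, and `π_B ^ r` commutes with `O_L` modulo `m_B ^ (r + 1)` exactly when `σ ^ r` fixes
the residue field `𝕃` of `L`. The difference of two distinct lifts of a level-`r` vertex has the
absolute value of `π_B ^ r`, hence induces `σ ^ r` as well, so nodes occur exactly at those levels.

It remains to see that `σ` generates `Gal(𝔹/𝕂)`, so that `σ ^ r` fixes `𝕃` iff `f ∣ r`. If `σ` has
order `m`, then `O_B/m_B^N` is generated by `1, π_B, …, π_B ^ (m - 1)` over a commutative subring,
and Cayley-Hamilton for right multiplication by `x ∈ O_B` gives monic relations
`∑ k ≤ m, c_k * b * x ^ k ≡ 0`, uniformly in `b` and for every `N`. By Jacobson density for the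
bimodule `B` this makes `1, x, …, x ^ m` linearly dependent over `K`, whence `[𝔹 : 𝕂] ≤ m`.

Lifts inside the centralizer come from averaging over the powers of an element of `O_L` that
generates `𝕃ˣ`.
-/

noncomputable section

variable {B : Type*} [DivisionRing B]

/-- Residue class count of the integers of S ⊆ B modulo the maximal ideal. -/
def resCard (ρ : AbsoluteValue B ℝ) (S : Set B) : ℕ :=
  Nat.card (Quot (fun x y : {b : B // b ∈ S ∧ ρ b ≤ 1} => ρ (x.1 - y.1) < 1))

/-- x represents an element of ℂ_r, the centralizer of the image of O_L in
O_B/m_B^r: x is integral and commutes with every element of O_L modulo m_B^r. -/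
def inResCentralizer (ρ : AbsoluteValue B ℝ) (L : Subring B) (πB : B)
    (r : ℕ) (x : B) : Prop :=
  ρ x ≤ 1 ∧ ∀ l ∈ L, ρ l ≤ 1 → ρ (x * l - l * x) ≤ ρ πB ^ r

/-- y is a child (in the full rose FR(L)) of the level-r vertex represented by
x: y is a lift of x to a vertex of level r+1, i.e. y ≡ x mod m_B^r and y
represents an element of ℂ_{r+1}. -/
def isChild (ρ : AbsoluteValue B ℝ) (L : Subring B) (πB : B)
    (r : ℕ) (x y : B) : Prop :=
  ρ (y - x) ≤ ρ πB ^ r ∧ inResCentralizer ρ L πB (r + 1) y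

/-! ### Double density for division rings -/

section DoubleDensity

open TensorProduct MulOpposite

attribute [local instance] instModuleTensorProductMop

lemma bimodule_tmul_smul (a : B) (b : Bᵐᵒᵖ) (x : B) :
    (a ⊗ₜ[Subring.center B] b) • x = a * x * b.unop :=
  AlgHom.mulLeftRight_apply (Subring.center B) B a b x

lemma isSimpleModule_bimodule : IsSimpleModule (B ⊗[Subring.center B] Bᵐᵒᵖ) B := by
  refine isSimpleModule_iff_toSpanSingleton_surjective.mpr ⟨inferInstance, fun x hx y => ?_⟩
  exact ⟨(y * x⁻¹) ⊗ₜ 1, by simp [bimodule_tmul_smul, hx]⟩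

lemma bimodule_end_apply (g : Module.End (B ⊗[Subring.center B] Bᵐᵒᵖ) B) :
    ∃ c : Subring.center B, ∀ x, g x = c • x := by
  have left (x : B) : g x = x * g 1 := by
    simpa [bimodule_tmul_smul] using g.map_smul (x ⊗ₜ 1) 1
  have right (x : B) : g x = g 1 * x := by
    simpa [bimodule_tmul_smul] using g.map_smul (1 ⊗ₜ op x) 1
  exact ⟨⟨g 1, Subring.mem_center_iff.mpr fun x => by rw [← left, right]⟩, right⟩

lemma exists_sum_mul_mul_eq (f : B →ₗ[Subring.center B] B) (s : Finset B) :
    ∃ t : Finset (B × B), ∀ x ∈ s, ∑ u ∈ t, u.1 * x * u.2 = f x := by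
  have := isSimpleModule_bimodule (B := B)
  let F : Module.End (Module.End (B ⊗[Subring.center B] Bᵐᵒᵖ) B) B :=
    { toFun := f
      map_add' := map_add f
      map_smul' := fun g x => by
        obtain ⟨c, hc⟩ := bimodule_end_apply g
        simp only [Module.End.smul_def, hc, map_smul, RingHom.id_apply] }
  obtain ⟨z, hz⟩ := jacobson_density F s
  obtain ⟨t, rfl⟩ := TensorProduct.exists_finset z
  refine ⟨t.map ⟨Prod.map id unop, Function.injective_id.prodMap unop_injective⟩, fun x hx => ?_⟩
  simpa [Finset.sum_smul, bimodule_tmul_smul] using (show f x = _ from hz x hx).symm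

end DoubleDensity

lemma exists_sum_mul_mul_eq_of_linearIndependent {ι : Type*} [Finite ι] {x : ι → B}
    (hx : LinearIndependent (Subring.center B) x) (y : ι → B) :
    ∃ t : Finset (B × B), ∀ i, ∑ u ∈ t, u.1 * x i * u.2 = y i := by
  classical
  cases nonempty_fintype ι
  obtain ⟨f, hf⟩ := ((Module.Basis.span hx).constr ℕ y).exists_extend
  obtain ⟨t, ht⟩ := exists_sum_mul_mul_eq f (Finset.univ.image x)
  refine ⟨t, fun i => (ht _ (by simp)).trans ?_⟩
  have hfi := LinearMap.congr_fun hf (Module.Basis.span hx i)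
  rwa [Module.Basis.constr_basis, LinearMap.comp_apply, Submodule.subtype_apply,
    Module.Basis.span_apply] at hfi

open Polynomial in
lemma exists_sum_smul_mul_pow_eq_zero {A R ι : Type*} [CommRing A] [Ring R] [Module A R]
    [IsScalarTower A R R] [Fintype ι] {v : ι → R} (hv : Submodule.span A (Set.range v) = ⊤)
    (x : R) : ∃ c : ℕ → A, c (Fintype.card ι) = 1 ∧
      ∀ b : R, ∑ k ∈ Finset.range (Fintype.card ι + 1), c k • (b * x ^ k) = 0 := by
  have : Module.Finite A R := ⟨Submodule.fg_def.mpr ⟨_, Set.finite_range v, hv⟩⟩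
  obtain ⟨p, hmonic, hdeg, hroot⟩ :=
    LinearMap.exists_monic_and_natDegree_eq_and_aeval_eq_zero A (LinearMap.mulRight A x)
  have hle : p.natDegree ≤ Fintype.card ι := by
    rw [hdeg, ← hv, ← Nat.card_eq_fintype_card]
    exact (Submodule.spanFinrank_span_le_ncard_of_finite (Set.finite_range v)).trans
      (Finite.card_range_le v)
  set m := Fintype.card ι
  set P := p * X ^ (m - p.natDegree) with hP
  have hPdeg : P.natDegree < m + 1 := by
    have := natDegree_X_pow_le (R := A) (m - p.natDegree)
    have : P.natDegree ≤ _ := natDegree_mul_le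
    omega
  have hProot : aeval (LinearMap.mulRight A x) P = 0 := by rw [hP, map_mul, hroot, zero_mul]
  refine ⟨P.coeff, ?_, fun b => ?_⟩
  · rw [hP, coeff_mul_X_pow', if_pos (Nat.sub_le _ _), Nat.sub_sub_self hle]
    exact hmonic
  · rw [aeval_eq_sum_range' hPdeg] at hProot
    simpa only [LinearMap.pow_mulRight, LinearMap.sum_apply, LinearMap.smul_apply,
      LinearMap.mulRight_apply, LinearMap.zero_apply] using LinearMap.congr_fun hProot b

section Galois
variable {k F : Type*} [Field k] [Field F] [Algebra k F] [FiniteDimensional k F] [IsGalois k F]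

lemma zpowers_eq_top_of_finrank_le_orderOf {σ : Gal(F/k)}
    (hσ : Module.finrank k F ≤ orderOf σ) : Subgroup.zpowers σ = ⊤ :=
  Subgroup.eq_top_of_le_card _ (by rwa [IsGalois.card_aut_eq_finrank, Nat.card_zpowers])

lemma forall_pow_apply_eq_iff_finrank_dvd {σ : Gal(F/k)} (hσ : Subgroup.zpowers σ = ⊤)
    (E : IntermediateField k F) [IsGalois k E] (r : ℕ) :
    (∀ x ∈ E, (σ ^ r) x = x) ↔ Module.finrank k E ∣ r := by
  set τ := AlgEquiv.restrictNormalHom E σ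
  have hτ : ∀ g, g ∈ Subgroup.zpowers τ := fun g => by
    obtain ⟨g', rfl⟩ := AlgEquiv.restrictNormalHom_surjective F g
    obtain ⟨i, rfl⟩ := Subgroup.mem_zpowers_iff.mp (hσ.ge (Subgroup.mem_top g'))
    exact ⟨i, (map_zpow _ σ i).symm⟩
  rw [← IsGalois.card_aut_eq_finrank k E, ← orderOf_eq_card_of_forall_mem_zpowers hτ,
    orderOf_dvd_iff_pow_eq_one, ← map_pow]
  refine ⟨fun h => AlgEquiv.ext fun x => Subtype.ext ?_, fun h x hx => ?_⟩
  · rw [AlgEquiv.restrictNormalHom_apply]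
    exact h x x.2
  · rw [← AlgEquiv.restrictNormalHom_apply E (σ ^ r) ⟨x, hx⟩, h, AlgEquiv.one_apply]

end Galois

lemma exists_forall_ne_zero_exists_pow_eq (F : Type*) [Field F] [Finite F] :
    ∃ w : F, w ≠ 0 ∧ ∀ x : F, x ≠ 0 → ∃ k : ℕ, w ^ k = x := by
  obtain ⟨w, hw⟩ := IsCyclic.exists_monoid_generator (α := Fˣ)
  refine ⟨w, w.ne_zero, fun x hx => ?_⟩
  obtain ⟨k, hk⟩ := Submonoid.mem_powers_iff .. |>.mp (hw (Units.mk0 x hx))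
  exact ⟨k, by simpa using congrArg Units.val hk⟩

lemma exists_pow_mul_le_one {r : ℝ} (hr0 : 0 ≤ r) (hr1 : r < 1) {ι : Type*} (s : Finset ι)
    (f : ι → ℝ) : ∃ J : ℕ, ∀ i ∈ s, r ^ J * f i ≤ 1 := by
  refine ((Finset.eventually_all s).mpr fun i _ => ?_).exists (f := Filter.atTop)
  have hlim := (tendsto_pow_atTop_nhds_zero_of_lt_one hr0 hr1).mul_const (f i)
  rw [zero_mul] at hlim
  exact hlim.eventually_le_const one_pos

lemma inv_mem_subring_of_finite {F : Type*} [Field F] [Finite F] (S : Subring F) {x : F}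
    (hx : x ∈ S) : x⁻¹ ∈ S := by
  rcases eq_or_ne x 0 with rfl | hx0
  · simp
  cases nonempty_fintype F
  have hq := Fintype.one_lt_card (α := F)
  have hinv : x ^ (Fintype.card F - 2) = x⁻¹ := by
    refine eq_inv_of_mul_eq_one_left ?_
    rw [← pow_succ, ← FiniteField.pow_card_sub_one_eq_one x hx0]
    congr 1
    omega
  exact hinv ▸ pow_mem hx _

/-! ### Ultrametric estimates -/

section Ultrametric

variable {R : Type*} [Ring R] {ρ : AbsoluteValue R ℝ}

lemma abv_sub_le_of_le [NoZeroDivisors R] (hna : IsNonarchimedean ρ) {x y : R} {c : ℝ}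
    (hx : ρ x ≤ c) (hy : ρ y ≤ c) : ρ (x - y) ≤ c := by
  simpa [sub_eq_add_neg] using (hna x (-y)).trans (max_le hx (by rwa [ρ.map_neg]))

lemma abv_sum_le_of_le (hna : IsNonarchimedean ρ) {ι : Type*} {s : Finset ι} {g : ι → R} {c : ℝ}
    (hc : 0 ≤ c) (hg : ∀ i ∈ s, ρ (g i) ≤ c) : ρ (∑ i ∈ s, g i) ≤ c := by
  rcases s.eq_empty_or_nonempty with rfl | hs
  · simpa
  · exact (hna.apply_sum_le_sup hs).trans (Finset.sup'_le hs _ hg)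

lemma abv_mul_le_left {x y : R} {c : ℝ} (hx : ρ x ≤ 1) (hy : ρ y ≤ c) : ρ (x * y) ≤ c := by
  rw [ρ.map_mul]
  exact (mul_le_of_le_one_left (ρ.nonneg y) hx).trans hy

lemma abv_mul_le_right {x y : R} {c : ℝ} (hx : ρ x ≤ c) (hy : ρ y ≤ 1) : ρ (x * y) ≤ c := by
  rw [ρ.map_mul]
  exact (mul_le_of_le_one_right (ρ.nonneg x) hy).trans hx

lemma abv_commutator_pow_le [IsDomain R] (hna : IsNonarchimedean ρ) {x ζ : R} {δ : ℝ} (hζ : ρ ζ ≤ 1)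
    (hcomm : ρ (x * ζ - ζ * x) ≤ δ) (i : ℕ) : ρ (x * ζ ^ i - ζ ^ i * x) ≤ δ := by
  induction i with
  | zero => simpa using (ρ.nonneg _).trans hcomm
  | succ i ih =>
    have hsplit : x * ζ ^ (i + 1) - ζ ^ (i + 1) * x =
        (x * ζ ^ i - ζ ^ i * x) * ζ + ζ ^ i * (x * ζ - ζ * x) := by
      simp only [pow_succ]
      noncomm_ring
    have hζi : ρ (ζ ^ i) ≤ 1 := by simpa using pow_le_one₀ (ρ.nonneg ζ) hζ
    rw [hsplit]
    exact (hna _ _).trans (max_le (abv_mul_le_right ih hζ) (abv_mul_le_left hζi hcomm))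

lemma abv_commutator_le_of_abv_sub_le [NoZeroDivisors R] (hna : IsNonarchimedean ρ) {x y z : R}
    {δ : ℝ} (hx : ρ x ≤ 1) (hyz : ρ (y - z) ≤ δ) (hz : ρ (x * z - z * x) ≤ δ) :
    ρ (x * y - y * x) ≤ δ := by
  have hsplit : x * y - y * x = (x * z - z * x) - ((y - z) * x - x * (y - z)) := by
    noncomm_ring
  rw [hsplit]
  exact abv_sub_le_of_le hna hz <|
    abv_sub_le_of_le hna (abv_mul_le_right hyz hx) (abv_mul_le_left hx hyz)

lemma mul_sum_conj_sub_sum_conj_mul (x ζ : R) (m : ℕ) :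
    ζ * ∑ i ∈ Finset.range m, ζ ^ i * x * ζ ^ (m - i) -
      (∑ i ∈ Finset.range m, ζ ^ i * x * ζ ^ (m - i)) * ζ = (ζ ^ m * x - x * ζ ^ m) * ζ := by
  have htele := Finset.sum_range_sub (fun i => ζ ^ i * x * ζ ^ (m + 1 - i)) m
  rw [Finset.mul_sum, Finset.sum_mul, ← Finset.sum_sub_distrib]
  convert htele using 1
  · refine Finset.sum_congr rfl fun i hi => ?_
    have him : m + 1 - i = m - i + 1 := by have := Finset.mem_range.mp hi; omega
    rw [him, Nat.add_sub_add_right, pow_succ' ζ i, pow_succ ζ (m - i)]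
    simp only [mul_assoc]
  · simp [sub_mul, mul_assoc, pow_succ]

/- The averaging `y = -∑ i < m, ζ ^ i * x * ζ ^ (m - i)` is, up to errors, `-m • x`, and `-m` is
close to `1`. -/
lemma exists_abv_sub_le_and_abv_commutator_le [IsDomain R] (hna : IsNonarchimedean ρ) {x ζ : R}
    {δ : ℝ} {m : ℕ} (hζ : ρ ζ ≤ 1) (hcomm : ρ (x * ζ - ζ * x) ≤ δ) (hroot : ρ x * ρ (ζ ^ m - 1) ≤ δ)
    (hcast : ρ x * ρ (m + 1 : R) ≤ δ) :
    ∃ y, ρ (y - x) ≤ δ ∧ ρ (y * ζ - ζ * y) ≤ ρ x * ρ (ζ ^ m - 1) := by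
  have hζpow (i : ℕ) : ρ (ζ ^ i) ≤ 1 := by simpa using pow_le_one₀ (ρ.nonneg ζ) hζ
  refine ⟨-∑ i ∈ Finset.range m, ζ ^ i * x * ζ ^ (m - i), ?_, ?_⟩
  · have hterm : ∀ i ∈ Finset.range m, ρ (ζ ^ i * x * ζ ^ (m - i) - x) ≤ δ := fun i hi => by
      have hpow : ζ ^ i * ζ ^ (m - i) = ζ ^ m := by
        rw [← pow_add, Nat.add_sub_cancel' (Finset.mem_range.mp hi).le]
      have hsplit : ζ ^ i * x * ζ ^ (m - i) - x =
          x * (ζ ^ m - 1) - (x * ζ ^ i - ζ ^ i * x) * ζ ^ (m - i) := by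
        rw [← hpow]
        noncomm_ring
      rw [hsplit]
      exact abv_sub_le_of_le hna (by rwa [ρ.map_mul])
        (abv_mul_le_right (abv_commutator_pow_le hna hζ hcomm i) (hζpow _))
    have hsplit : -∑ i ∈ Finset.range m, ζ ^ i * x * ζ ^ (m - i) - x =
        -∑ i ∈ Finset.range m, (ζ ^ i * x * ζ ^ (m - i) - x) - x * (m + 1) := by
      rw [Finset.sum_sub_distrib, Finset.sum_const, Finset.card_range, nsmul_eq_mul,
        (Nat.cast_commute m x).eq]
      noncomm_ring
    rw [hsplit]
    refine abv_sub_le_of_le hna ?_ (by rwa [ρ.map_mul])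
    rw [ρ.map_neg]
    exact abv_sum_le_of_le hna ((ρ.nonneg _).trans hcomm) hterm
  · have hsplit : (-∑ i ∈ Finset.range m, ζ ^ i * x * ζ ^ (m - i)) * ζ -
        ζ * -∑ i ∈ Finset.range m, ζ ^ i * x * ζ ^ (m - i) =
          ((ζ ^ m - 1) * x - x * (ζ ^ m - 1)) * ζ := by
      rw [neg_mul, mul_neg, sub_neg_eq_add, neg_add_eq_sub, mul_sum_conj_sub_sum_conj_mul]
      noncomm_ring
    rw [hsplit]
    refine abv_mul_le_right (abv_sub_le_of_le hna ?_ ?_) hζ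
    · rw [ρ.map_mul, mul_comm]
    · rw [ρ.map_mul]

end Ultrametric

section DivisionRing

variable {ρ : AbsoluteValue B ℝ}

lemma abv_conj (u : Bˣ) (x : B) : ρ (u * x * (u⁻¹ : Bˣ)) = ρ x := by
  have hu : ρ u ≠ 0 := ρ.ne_zero u.ne_zero
  rw [ρ.map_mul, ρ.map_mul, Units.val_inv_eq_inv_val, map_inv₀]
  field_simp

lemma resCard_eq_card_range (S : Set B) {Y : Type*} (g : {b : B // b ∈ S ∧ ρ b ≤ 1} → Y)
    (hg : ∀ x y, g x = g y ↔ ρ (x.1 - y.1) < 1) : resCard ρ S = Nat.card (Set.range g) := by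
  have hinj : Function.Injective (Quot.lift g fun x y => (hg x y).mpr) := by
    rintro ⟨x⟩ ⟨y⟩ hxy
    exact Quot.sound ((hg x y).mp hxy)
  rw [← Set.range_quot_lift fun x y => (hg x y).mpr, Nat.card_range_of_injective hinj, resCard]

end DivisionRing

/-! ### Valuation rings and their truncations -/

/-- `π` generates the maximal ideal of the valuation ring of the nonarchimedean absolute value
`ρ`, that is, `ρ π` is the largest value of `ρ` below `1`. -/
structure IsUniformizer (ρ : AbsoluteValue B ℝ) (π : B) : Prop where
  isNonarchimedean : IsNonarchimedean ρ
  pos : 0 < ρ π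
  lt_one : ρ π < 1
  le_of_lt_one : ∀ x, ρ x < 1 → ρ x ≤ ρ π

namespace IsUniformizer

variable {ρ : AbsoluteValue B ℝ} {π : B}

lemma ne_zero (h : IsUniformizer ρ π) : π ≠ 0 :=
  ρ.pos_iff.mp h.pos

lemma abv_lt_pow_iff (h : IsUniformizer ρ π) {x : B} {r : ℕ} :
    ρ x < ρ π ^ r ↔ ρ x ≤ ρ π ^ (r + 1) := by
  have hr : 0 < ρ π ^ r := pow_pos h.pos r
  refine ⟨fun hx => ?_, fun hx => hx.trans_lt ?_⟩
  swap
  · exact pow_lt_pow_right_of_lt_one₀ h.pos h.lt_one r.lt_succ_self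
  have hdiv : ρ (x * (π ^ r)⁻¹) = ρ x / ρ π ^ r := by simp [div_eq_mul_inv]
  have hle := h.le_of_lt_one (x * (π ^ r)⁻¹) (by rwa [hdiv, div_lt_one hr])
  rwa [hdiv, div_le_iff₀ hr, ← pow_succ'] at hle

lemma abv_lt_one_iff (h : IsUniformizer ρ π) {x : B} : ρ x < 1 ↔ ρ x ≤ ρ π := by
  simpa using h.abv_lt_pow_iff (x := x) (r := 0)

lemma inResCentralizer_mono (h : IsUniformizer ρ π) {L : Subring B} {r s : ℕ} (hrs : r ≤ s) {x : B}
    (hx : inResCentralizer ρ L π s x) : inResCentralizer ρ L π r x :=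
  ⟨hx.1, fun l hl hl1 => (hx.2 l hl hl1).trans (pow_le_pow_of_le_one h.pos.le h.lt_one.le hrs)⟩

lemma inResCentralizer_add (h : IsUniformizer ρ π) {L : Subring B} {r : ℕ} {x y : B}
    (hx : inResCentralizer ρ L π r x) (hy : inResCentralizer ρ L π r y) :
    inResCentralizer ρ L π r (x + y) := by
  refine ⟨(h.isNonarchimedean _ _).trans (max_le hx.1 hy.1), fun l hl hl1 => ?_⟩
  have hsplit : (x + y) * l - l * (x + y) = (x * l - l * x) + (y * l - l * y) := by noncomm_ring
  rw [hsplit]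
  exact (h.isNonarchimedean _ _).trans (max_le (hx.2 l hl hl1) (hy.2 l hl hl1))

/-- The valuation ring `O_B`. -/
def integers (h : IsUniformizer ρ π) : Subring B where
  carrier := {x | ρ x ≤ 1}
  mul_mem' := abv_mul_le_left
  one_mem' := ρ.map_one.le
  add_mem' := fun hx hy => (h.isNonarchimedean _ _).trans (max_le hx hy)
  zero_mem' := by simp
  neg_mem' := fun {x} hx => (ρ.map_neg x).trans_le hx

/-- `π` as an element of the valuation ring. -/
def uniformizer (h : IsUniformizer ρ π) : h.integers :=
  ⟨π, h.lt_one.le⟩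

/-- `π` as a unit of `B`. -/
def unit (h : IsUniformizer ρ π) : Bˣ :=
  Units.mk0 π h.ne_zero

/-- The ideal `m_B ^ N` of the valuation ring, described by the absolute value. -/
def idealPow (h : IsUniformizer ρ π) (N : ℕ) : Ideal h.integers where
  carrier := {x | ρ (x : B) ≤ ρ π ^ N}
  add_mem' := fun hx hy => (h.isNonarchimedean _ _).trans (max_le hx hy)
  zero_mem' := by simp [h.pos.le]
  smul_mem' := fun c _ hx => abv_mul_le_left c.2 hx

instance (h : IsUniformizer ρ π) (N : ℕ) : (h.idealPow N).IsTwoSided where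
  mul_mem_of_left := fun b hx => abv_mul_le_right hx b.2

/-- The ring `𝔹_N = O_B/m_B^N`. -/
def Truncation (h : IsUniformizer ρ π) (N : ℕ) : Type _ :=
  h.integers ⧸ h.idealPow N

instance (h : IsUniformizer ρ π) (N : ℕ) : Ring (h.Truncation N) :=
  inferInstanceAs (Ring (h.integers ⧸ h.idealPow N))

/-- The reduction map from the valuation ring onto `𝔹_N`. -/
def reduction (h : IsUniformizer ρ π) (N : ℕ) : h.integers →+* h.Truncation N :=
  Ideal.Quotient.mk (h.idealPow N)

lemma reduction_surjective (h : IsUniformizer ρ π) (N : ℕ) :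
    Function.Surjective (h.reduction N) :=
  Ideal.Quotient.mk_surjective

lemma reduction_eq_iff (h : IsUniformizer ρ π) {N : ℕ} {x y : h.integers} :
    h.reduction N x = h.reduction N y ↔ ρ ((x : B) - y) ≤ ρ π ^ N :=
  Ideal.Quotient.eq

lemma reduction_eq_zero_iff (h : IsUniformizer ρ π) {N : ℕ} {x : h.integers} :
    h.reduction N x = 0 ↔ ρ (x : B) ≤ ρ π ^ N :=
  Ideal.Quotient.eq_zero_iff_mem

lemma isUnit_of_abv_eq_one (h : IsUniformizer ρ π) {x : h.integers} (hx : ρ (x : B) = 1) :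
    IsUnit x := by
  have hne : (x : B) ≠ 0 := ρ.ne_zero_iff.mp (by simp [hx])
  let y : h.integers := ⟨(x : B)⁻¹, show ρ (x : B)⁻¹ ≤ 1 by simp [hx]⟩
  exact ⟨⟨x, y, Subtype.ext (mul_inv_cancel₀ hne), Subtype.ext (inv_mul_cancel₀ hne)⟩, rfl⟩

/-- Conjugation by a unit of `B` as an endomorphism of the valuation ring. -/
def conj (h : IsUniformizer ρ π) (u : Bˣ) : h.integers →+* h.integers :=
  (MulSemiringAction.toRingHom (ConjAct Bˣ) B (ConjAct.toConjAct u)).restrict _ _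
    fun x hx => (abv_conj u x).trans_le hx

lemma coe_conj (h : IsUniformizer ρ π) (u : Bˣ) (x : h.integers) :
    (h.conj u x : B) = u * x * (u⁻¹ : Bˣ) :=
  rfl

/-! ### The residue field and its automorphisms -/

/-- The residue field `𝔹` of `B`; when finite it is commutative, by Wedderburn's theorem. -/
def ResidueField (h : IsUniformizer ρ π) : Type _ :=
  h.Truncation 1

instance (h : IsUniformizer ρ π) : Ring h.ResidueField :=
  inferInstanceAs (Ring (h.Truncation 1))

instance (h : IsUniformizer ρ π) : Nontrivial h.ResidueField :=
  ⟨h.reduction 1 1, h.reduction 1 0, fun h10 => by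
    simpa [h.lt_one.not_ge] using h.reduction_eq_iff.mp h10⟩

lemma isUnit_or_eq_zero_residueField (h : IsUniformizer ρ π) (x : h.ResidueField) :
    IsUnit x ∨ x = 0 := by
  obtain ⟨x, rfl⟩ := h.reduction_surjective 1 x
  rcases (show ρ (x : B) ≤ 1 from x.2).eq_or_lt with hx | hx
  · exact .inl ((h.isUnit_of_abv_eq_one hx).map (h.reduction 1))
  · refine .inr (h.reduction_eq_zero_iff.mpr ?_)
    exact (h.abv_lt_one_iff.mp hx).trans_eq (pow_one _).symm

instance (h : IsUniformizer ρ π) : DivisionRing h.ResidueField :=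
  DivisionRing.ofIsUnitOrEqZero h.isUnit_or_eq_zero_residueField

instance (h : IsUniformizer ρ π) [Finite h.ResidueField] : Field h.ResidueField :=
  littleWedderburn h.ResidueField

lemma card_residueField (h : IsUniformizer ρ π) :
    Nat.card h.ResidueField = resCard ρ (Set.univ : Set B) := by
  let g : {b : B // b ∈ Set.univ ∧ ρ b ≤ 1} → h.Truncation 1 :=
    fun b => h.reduction 1 ⟨b.1, b.2.2⟩
  have hg : Set.range g = Set.univ := Set.range_eq_univ.mpr fun x => by
    obtain ⟨x, rfl⟩ := h.reduction_surjective 1 x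
    exact ⟨⟨x, trivial, x.2⟩, rfl⟩
  rw [resCard_eq_card_range _ g fun x y => by
    rw [h.reduction_eq_iff, h.abv_lt_one_iff, pow_one], hg]
  exact Nat.card_univ.symm

variable (h : IsUniformizer ρ π) [Finite h.ResidueField]

/-- The reduction map from the valuation ring onto the residue field. -/
def residue : h.integers →+* h.ResidueField :=
  h.reduction 1

lemma residue_surjective : Function.Surjective h.residue :=
  h.reduction_surjective 1

lemma residue_eq_iff {x y : h.integers} : h.residue x = h.residue y ↔ ρ ((x : B) - y) < 1 := by
  rw [h.abv_lt_one_iff, ← pow_one (ρ π)]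
  exact h.reduction_eq_iff

lemma residue_eq_zero_iff {x : h.integers} : h.residue x = 0 ↔ ρ (x : B) < 1 := by
  simpa using h.residue_eq_iff (x := x) (y := 0)

/-- The image in the residue field of the integers of a subring `S` of `B`. It is a subring of a
finite field, hence a subfield. -/
def residueSubfield (S : Subring B) : Subfield h.ResidueField where
  __ := (S.comap h.integers.subtype).map h.residue
  inv_mem' := fun _ => inv_mem_subring_of_finite ((S.comap h.integers.subtype).map h.residue)

lemma card_residueSubfield (S : Subring B) :
    Nat.card (h.residueSubfield S) = resCard ρ (S : Set B) := by
  rw [resCard_eq_card_range _ (fun b => h.residue ⟨b.1, b.2.2⟩) fun x y => h.residue_eq_iff]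
  congr! 2
  ext x
  exact ⟨fun ⟨z, hz, hzx⟩ => ⟨⟨z, hz, z.2⟩, hzx⟩, fun ⟨b, hb⟩ => ⟨⟨b.1, b.2.2⟩, b.2.1, hb⟩⟩

/-- The endomorphism of the residue field induced by conjugation by a unit of `B`. -/
def residueConjHom (u : Bˣ) : h.ResidueField →+* h.ResidueField :=
  RingHom.liftOfSurjective h.residue h.residue_surjective
    ⟨h.residue.comp (h.conj u), fun x hx => h.residue_eq_zero_iff.mpr <| by
      rw [coe_conj, abv_conj]
      exact h.residue_eq_zero_iff.mp hx⟩

lemma residueConjHom_residue (u : Bˣ) (x : h.integers) :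
    h.residueConjHom u (h.residue x) = h.residue (h.conj u x) :=
  RingHom.liftOfSurjective_comp_apply ..

/-- The automorphism of the residue field induced by conjugation by a unit of `B`; it is linear
over the residue field of the centre. For a uniformizer it is the `σ` of the text. -/
def residueConj : Bˣ →* Gal(h.ResidueField/h.residueSubfield (Subring.center B)) :=
  (AlgEquiv.algHomUnitsEquiv _ _).toMonoidHom.comp (MonoidHom.toHomUnits
    { toFun := fun u =>
        { h.residueConjHom u with
          commutes' := by
            rintro ⟨_, x, hx, rfl⟩
            refine (h.residueConjHom_residue u x).trans (congrArg h.residue (Subtype.ext ?_))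
            have hcomm : (u : B) * x = x * u := Subring.mem_center_iff.mp hx u
            rw [coe_conj, hcomm, mul_assoc, Units.mul_inv, mul_one] }
      map_one' := by
        ext x
        obtain ⟨x, rfl⟩ := h.residue_surjective x
        refine (h.residueConjHom_residue 1 x).trans (congrArg h.residue (Subtype.ext ?_))
        simp [coe_conj]
      map_mul' := fun u v => by
        ext x
        obtain ⟨x, rfl⟩ := h.residue_surjective x
        refine (h.residueConjHom_residue (u * v) x).trans ?_
        refine Eq.trans ?_ (congrArg (h.residueConjHom u) (h.residueConjHom_residue v x)).symm
        rw [residueConjHom_residue]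
        exact congrArg h.residue (Subtype.ext (by simp [coe_conj, mul_assoc])) })

lemma residueConj_residue (u : Bˣ) (x : h.integers) :
    h.residueConj u (h.residue x) = h.residue (h.conj u x) :=
  h.residueConjHom_residue u x

lemma residueConj_eq_one_of_abv_eq_one {u : Bˣ} (hu : ρ u = 1) : h.residueConj u = 1 := by
  ext x
  obtain ⟨x, rfl⟩ := h.residue_surjective x
  let v : h.integers := ⟨u, hu.le⟩
  have hv : h.residue v ≠ 0 := fun hv => (h.residue_eq_zero_iff.mp hv).ne hu
  have hcomm : h.conj u x * v = v * x := Subtype.ext (by simp [coe_conj, v])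
  rw [residueConj_residue]
  refine mul_right_cancel₀ hv ?_
  rw [← map_mul, hcomm, map_mul, mul_comm, AlgEquiv.one_apply]

lemma residueConj_eq_of_abv_eq {u v : Bˣ} (huv : ρ u = ρ v) :
    h.residueConj u = h.residueConj v := by
  rw [← div_eq_one, ← map_div]
  apply h.residueConj_eq_one_of_abv_eq_one
  have hv : ρ v ≠ 0 := ρ.ne_zero v.ne_zero
  simp [huv, hv]

lemma abv_commutator_lt_iff (u : Bˣ) (x : h.integers) :
    ρ (u * x - x * u) < ρ u ↔ h.residueConj u (h.residue x) = h.residue x := by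
  have hcomm : (u * x - x * u : B) = (h.conj u x - x) * u := by
    simp [coe_conj, sub_mul]
  rw [residueConj_residue, residue_eq_iff, hcomm, ρ.map_mul,
    mul_lt_iff_lt_one_left (ρ.pos u.ne_zero)]

/-! ### Conjugation by a uniformizer generates the Galois group -/

lemma abv_pow_pow_sub_one_le {q : ℕ} (hq : (q : h.ResidueField) = 0) {x : h.integers}
    (hx : h.residue x = 1) (N : ℕ) : ρ ((x : B) ^ q ^ N - 1) ≤ ρ π ^ (N + 1) := by
  induction N with
  | zero => simpa [h.abv_lt_one_iff] using h.residue_eq_iff.mp (hx.trans (map_one _).symm)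
  | succ N ih =>
    have hsum : h.residue (∑ i ∈ Finset.range q, (x ^ q ^ N) ^ i) = 0 := by simp [hx, hq]
    rw [residue_eq_zero_iff, abv_lt_one_iff h] at hsum
    rw [pow_succ q, pow_mul, ← geom_sum_mul, ρ.map_mul, pow_succ' (ρ π)]
    push_cast at hsum
    gcongr

lemma cast_card_residueField : (Nat.card h.ResidueField : h.ResidueField) = 0 := by
  cases nonempty_fintype h.ResidueField
  simp

lemma exists_teichmuller {w : h.ResidueField} (hw : w ≠ 0) (N : ℕ) : ∃ T : h.integers,
    h.residue T = w ∧ ρ ((T : B) ^ (Nat.card h.ResidueField - 1) - 1) ≤ ρ π ^ (N + 1) := by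
  cases nonempty_fintype h.ResidueField
  obtain ⟨x, rfl⟩ := h.residue_surjective w
  refine ⟨x ^ Nat.card h.ResidueField ^ N, ?_, ?_⟩
  · rw [map_pow, Nat.card_eq_fintype_card, FiniteField.pow_card_pow]
  · have hx : h.residue (x ^ (Nat.card h.ResidueField - 1)) = 1 := by
      rw [map_pow, Nat.card_eq_fintype_card, FiniteField.pow_card_sub_one_eq_one _ hw]
    simpa [← pow_mul, mul_comm] using
      h.abv_pow_pow_sub_one_le h.cast_card_residueField hx N

lemma exists_abv_sub_mul_lt {T : h.integers}
    (hT : ∀ w : h.ResidueField, w ≠ 0 → ∃ k : ℕ, h.residue T ^ k = w) {b y : B} (hy : y ≠ 0)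
    (hb : ρ b ≤ ρ y) : ∃ t : h.integers, (t = 0 ∨ ∃ k : ℕ, t = T ^ k) ∧ ρ (b - t * y) < ρ y := by
  have hy' : 0 < ρ y := ρ.pos hy
  let a : h.integers := ⟨b * y⁻¹, show ρ (b * y⁻¹) ≤ 1 by
    rwa [ρ.map_mul, map_inv₀, ← div_eq_mul_inv, div_le_one hy']⟩
  obtain ⟨t, ht, hat⟩ : ∃ t : h.integers, (t = 0 ∨ ∃ k : ℕ, t = T ^ k) ∧
      h.residue a = h.residue t := by
    by_cases ha : h.residue a = 0
    · exact ⟨0, .inl rfl, by rw [ha, map_zero]⟩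
    · obtain ⟨k, hk⟩ := hT _ ha
      exact ⟨T ^ k, .inr ⟨k, rfl⟩, by rw [map_pow, hk]⟩
  refine ⟨t, ht, ?_⟩
  have hb : b - t * y = (a - t) * y := by simp [a, sub_mul, hy]
  rw [hb, ρ.map_mul, mul_lt_iff_lt_one_left hy']
  exact h.residue_eq_iff.mp hat

/- Successive approximation: an element of absolute value at most `ρ π ^ (m * q + j)` is, up to a
smaller one, `t * P ^ q * π ^ j` with `t` zero or a power of `T`. -/
lemma span_range_reduction_pow_eq_top {N m : ℕ} (hm : 0 < m) {T P : h.integers}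
    (hT : ∀ w : h.ResidueField, w ≠ 0 → ∃ k : ℕ, h.residue T ^ k = w)
    (hP : ρ (P : B) = ρ π ^ m) {A : Subring (h.Truncation N)}
    (hTA : h.reduction N T ∈ A) (hPA : h.reduction N P ∈ A) :
    Submodule.span A (Set.range fun j : Fin m => h.reduction N h.uniformizer ^ (j : ℕ)) =
      ⊤ := by
  set V := Submodule.span A
    (Set.range fun j : Fin m => h.reduction N h.uniformizer ^ (j : ℕ))
  suffices hmem : ∀ b : h.integers, ρ (b : B) ≤ ρ π ^ 0 → h.reduction N b ∈ V by
    refine Submodule.eq_top_iff'.mpr fun x => ?_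
    obtain ⟨b, rfl⟩ := h.reduction_surjective N x
    exact hmem b (b.2.trans_eq (pow_zero _).symm)
  refine Nat.decreasingInduction (n := N)
    (motive := fun k _ => ∀ b : h.integers, ρ (b : B) ≤ ρ π ^ k → h.reduction N b ∈ V)
    (fun k _ ih b hb => ?_) (fun b hb => ?_) N.zero_le
  · set y := P ^ (k / m) * h.uniformizer ^ (k % m) with hy
    have hρy : ρ (y : B) = ρ π ^ k := by
      simp only [hy, uniformizer, Subring.coe_mul, Subring.coe_pow, map_mul, map_pow, hP]
      rw [← pow_mul, ← pow_add, Nat.div_add_mod]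
    have hy0 : (y : B) ≠ 0 := ρ.ne_zero_iff.mp (hρy ▸ (pow_pos h.pos k).ne')
    obtain ⟨t, ht, hbt⟩ := h.exists_abv_sub_mul_lt hT hy0 (hb.trans_eq hρy.symm)
    have htA : h.reduction N (t * P ^ (k / m)) ∈ A := by
      rw [map_mul, map_pow]
      refine mul_mem ?_ (pow_mem hPA _)
      rcases ht with rfl | ⟨i, rfl⟩
      · simp
      · exact map_pow (h.reduction N) T i ▸ pow_mem hTA i
    have hty : h.reduction N (t * y) ∈ V := by
      rw [hy, ← mul_assoc, map_mul, map_pow _ h.uniformizer]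
      exact V.smul_mem ⟨_, htA⟩ (Submodule.subset_span ⟨⟨k % m, Nat.mod_lt k hm⟩, rfl⟩)
    have hrest : h.reduction N (b - t * y) ∈ V :=
      ih _ (h.abv_lt_pow_iff.mp (hbt.trans_eq hρy))
    simpa using add_mem hrest hty
  · have hb0 : h.reduction N b = 0 := h.reduction_eq_zero_iff.mpr hb
    exact hb0 ▸ V.zero_mem

lemma exists_generator_commutator_le {m : ℕ} (hm : h.residueConj (h.unit ^ m) = 1) (N : ℕ) :
    ∃ T P : h.integers, (∀ w : h.ResidueField, w ≠ 0 → ∃ k : ℕ, h.residue T ^ k = w) ∧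
      ρ (P : B) = ρ π ^ m ∧ ρ (P * T - T * P : B) ≤ ρ π ^ N := by
  obtain ⟨w, hw0, hw⟩ := exists_forall_ne_zero_exists_pow_eq h.ResidueField
  obtain ⟨T, rfl, hroot⟩ := h.exists_teichmuller hw0 N
  have hπm : ρ (π ^ m) ≤ 1 := by simpa using pow_le_one₀ h.pos.le h.lt_one.le
  have hcomm : ρ (π ^ m * T - T * π ^ m) ≤ ρ π ^ (m + 1) := by
    have := (h.abv_commutator_lt_iff (h.unit ^ m) T).mpr (by rw [hm, AlgEquiv.one_apply])
    simpa [unit, ← h.abv_lt_pow_iff] using this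
  have hcast : ρ ((Nat.card h.ResidueField - 1 : ℕ) + 1 : B) ≤ ρ π := by
    have hcard : h.residue (Nat.card h.ResidueField) = 0 := by
      simpa using h.cast_card_residueField
    rw [← Nat.cast_add_one, Nat.sub_add_cancel Nat.card_pos, ← h.abv_lt_one_iff]
    simpa using h.residue_eq_zero_iff.mp hcard
  obtain ⟨P, hP, hPT⟩ := exists_abv_sub_le_and_abv_commutator_le h.isNonarchimedean
    (δ := ρ π ^ (m + 1)) T.2 hcomm
    (by
      rw [ρ.map_pow, pow_succ (ρ π)]
      exact mul_le_mul_of_nonneg_left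
        (hroot.trans (pow_le_of_le_one h.pos.le h.lt_one.le N.succ_ne_zero)) (by positivity))
    (by
      rw [ρ.map_pow, pow_succ]
      exact mul_le_mul_of_nonneg_left hcast (by positivity))
  have hρP : ρ P = ρ π ^ m := by
    have hlt : ρ (P - π ^ m) < ρ (π ^ m) := by
      rw [ρ.map_pow, h.abv_lt_pow_iff]
      exact hP
    rw [← ρ.map_pow, ← add_sub_cancel (π ^ m) P, h.isNonarchimedean.add_eq_left_of_lt hlt]
  refine ⟨T, ⟨P, (hρP.trans (ρ.map_pow _ _).symm).trans_le hπm⟩, hw, hρP, hPT.trans ?_⟩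
  refine (mul_le_of_le_one_left (ρ.nonneg _) hπm).trans (hroot.trans ?_)
  exact pow_le_pow_of_le_one h.pos.le h.lt_one.le N.le_succ

/- Cayley-Hamilton for right multiplication by `x` on `O_B/m_B^N`, which is generated by
`1, π, …, π ^ (m - 1)` over the commutative ring generated by `T` and `P`. -/
lemma exists_abv_sum_mul_mul_pow_le {m : ℕ} (hm0 : 0 < m)
    (hm : h.residueConj (h.unit ^ m) = 1) (N : ℕ) (x : h.integers) :
    ∃ c : ℕ → h.integers, c m = 1 ∧ ∀ b : h.integers,
      ρ (∑ k ∈ Finset.range (m + 1), c k * b * x ^ k : h.integers) ≤ ρ π ^ N := by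
  obtain ⟨T, P, hT, hP, hPT⟩ := h.exists_generator_commutator_le hm N
  let A : Subring (h.Truncation N) := Subring.closure {h.reduction N T, h.reduction N P}
  have hcomm : h.reduction N P * h.reduction N T = h.reduction N T * h.reduction N P := by
    rw [← map_mul, ← map_mul]
    exact h.reduction_eq_iff.mpr hPT
  have : IsMulCommutative A := Subring.isMulCommutative_closure <| by
    rintro _ (rfl | rfl) _ (rfl | rfl) <;> simp [hcomm]
  open scoped IsMulCommutative in
  obtain ⟨c, hc1, hc⟩ := exists_sum_smul_mul_pow_eq_zero
    (h.span_range_reduction_pow_eq_top hm0 hT hP (A := A)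
      (Subring.subset_closure (by simp)) (Subring.subset_closure (by simp))) (h.reduction N x)
  have hlift (z : h.Truncation N) : ∃ d, h.reduction N d = z ∧ (z = 1 → d = 1) := by
    by_cases hz : z = 1
    · exact ⟨1, by rw [map_one, hz], fun _ => rfl⟩
    · obtain ⟨d, hd⟩ := h.reduction_surjective N z
      exact ⟨d, hd, fun hz' => absurd hz' hz⟩
  choose d hd hd1 using fun k => hlift (c k)
  rw [Fintype.card_fin] at hc1 hc
  refine ⟨d, hd1 m (by rw [hc1]; rfl), fun b => h.reduction_eq_zero_iff.mp ?_⟩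
  simpa [hd, mul_assoc, Subring.smul_def] using hc (h.reduction N b)

/- A bimodule combination `∑ u.1 * _ * u.2` sending `1, x, …, x ^ m` to `0, …, 0, 1` turns the monic
relations of `exists_abv_sum_mul_mul_pow_le` into `π ^ (2 * J) ≡ 0` modulo arbitrarily high powers
of `m_B`. -/
lemma not_linearIndependent_pow {m : ℕ} (hm0 : 0 < m) (hm : h.residueConj (h.unit ^ m) = 1)
    (x : h.integers) :
    ¬ LinearIndependent (Subring.center B) fun k : Fin (m + 1) => (x : B) ^ (k : ℕ) := by
  classical
  intro hx
  obtain ⟨t, ht⟩ := exists_sum_mul_mul_eq_of_linearIndependent hx (Pi.single (Fin.last m) 1)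
  obtain ⟨J, hJ⟩ := exists_pow_mul_le_one h.pos.le h.lt_one
    (t.image Prod.fst ∪ t.image Prod.snd) ρ
  have hleft (u : B × B) (hu : u ∈ t) : ρ (π ^ J * u.1) ≤ 1 := by
    simpa using hJ u.1 (Finset.mem_union_left _ (Finset.mem_image_of_mem _ hu))
  have hright (u : B × B) (hu : u ∈ t) : ρ (u.2 * π ^ J) ≤ 1 := by
    simpa [mul_comm] using hJ u.2 (Finset.mem_union_right _ (Finset.mem_image_of_mem _ hu))
  obtain ⟨c, hcm, hc⟩ := h.exists_abv_sum_mul_mul_pow_le hm0 hm (2 * J + 1) x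
  have hsum : ∑ u ∈ t, (∑ k ∈ Finset.range (m + 1), c k * (π ^ J * u.1) * x ^ k : B) *
      (u.2 * π ^ J) = π ^ (2 * J) := by
    calc
      _ = ∑ k ∈ Finset.range (m + 1), (c k : B) * π ^ J * (∑ u ∈ t, u.1 * x ^ k * u.2) * π ^ J := by
        simp only [Finset.sum_mul, Finset.mul_sum, mul_assoc]
        exact Finset.sum_comm
      _ = π ^ (2 * J) := by
        rw [Finset.sum_range, Fin.sum_univ_castSucc]
        simp only [ht]
        simp [hcm, two_mul, pow_add, Fin.castSucc_ne_last]
  have hle : ρ (π ^ (2 * J)) ≤ ρ π ^ (2 * J + 1) := by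
    rw [← hsum]
    refine abv_sum_le_of_le h.isNonarchimedean (by positivity) fun u hu => ?_
    exact abv_mul_le_right (by simpa using hc ⟨_, hleft u hu⟩) (hright u hu)
  rw [ρ.map_pow] at hle
  exact hle.not_gt (pow_lt_pow_right_of_lt_one₀ h.pos h.lt_one (2 * J).lt_succ_self)

lemma linearIndependent_of_residue {ι : Type*} {v : ι → h.integers}
    (hv : LinearIndependent (h.residueSubfield (Subring.center B)) fun i => h.residue (v i)) :
    LinearIndependent (Subring.center B) fun i => (v i : B) := by
  refine linearIndependent_iff''.mpr fun s g hgs hg => ?_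
  by_contra! hne
  obtain ⟨i₁, hi₁⟩ := hne
  have hi₁s : i₁ ∈ s := by_contra fun hi => hi₁ (hgs i₁ hi)
  obtain ⟨i₀, hi₀s, hmax⟩ := s.exists_max_image (fun i => ρ (g i)) ⟨i₁, hi₁s⟩
  have hi₀ : 0 < ρ (g i₀) := (ρ.pos (by simpa using hi₁)).trans_le (hmax i₁ hi₁s)
  have hg₀ : (g i₀ : B) ≠ 0 := ρ.ne_zero_iff.mp hi₀.ne'
  have ha (i : ι) : ρ ((g i₀)⁻¹ * g i : Subring.center B) ≤ 1 := by
    by_cases hi : i ∈ s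
    · simpa [inv_mul_le_one₀ hi₀] using hmax i hi
    · simp [hgs i hi]
  let a (i : ι) : h.residueSubfield (Subring.center B) :=
    ⟨h.residue ⟨_, ha i⟩, ⟨_, ha i⟩, ((g i₀)⁻¹ * g i).2, rfl⟩
  have hsum : ∑ i ∈ s, a i • h.residue (v i) = 0 := by
    calc
      _ = h.residue (∑ i ∈ s, ⟨_, ha i⟩ * v i) := by simp [a, Subfield.smul_def]
      _ = h.residue 0 := by
        congr 1
        ext
        simpa [mul_assoc, ← Finset.mul_sum, Subring.smul_def] using Or.inr hg
      _ = 0 := map_zero _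
  have h1 := congrArg Subtype.val (linearIndependent_iff'.mp hv s a hsum i₀ hi₀s)
  have h2 := h.residue_eq_zero_iff.mp h1
  simp [hg₀] at h2

lemma finrank_residueField_le_orderOf :
    Module.finrank (h.residueSubfield (Subring.center B)) h.ResidueField ≤
      orderOf (h.residueConj h.unit) := by
  set m := orderOf (h.residueConj h.unit)
  by_contra! hlt
  let pb := Field.powerBasisOfFiniteOfSeparable (h.residueSubfield (Subring.center B))
    h.ResidueField
  rw [pb.finrank] at hlt
  obtain ⟨x, hx⟩ := h.residue_surjective pb.gen
  refine h.not_linearIndependent_pow (orderOf_pos _) (by rw [map_pow, pow_orderOf_eq_one]) x ?_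
  have hpow := pb.basis.linearIndependent.comp _ (Fin.castLE_injective (Nat.succ_le_of_lt hlt))
  exact h.linearIndependent_of_residue (v := fun k : Fin (m + 1) => x ^ (k : ℕ))
    (by simpa [Function.comp_def, hx] using hpow)

lemma zpowers_residueConj_unit : Subgroup.zpowers (h.residueConj h.unit) = ⊤ :=
  zpowers_eq_top_of_finrank_le_orderOf h.finrank_residueField_le_orderOf

/-! ### Lifting and nodes in the full rose -/

lemma exists_residue_generator (L : Subring B) : ∃ ζ ∈ L, ρ ζ ≤ 1 ∧
    ρ (ζ ^ (Nat.card (h.residueSubfield L) - 1) - 1) < 1 ∧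
      ∀ l ∈ L, ρ l ≤ 1 → ρ l < 1 ∨ ∃ k : ℕ, ρ (l - ζ ^ k) < 1 := by
  cases nonempty_fintype (h.residueSubfield L)
  obtain ⟨⟨_, ζ, hζL, rfl⟩, hw0, hw⟩ :=
    exists_forall_ne_zero_exists_pow_eq (h.residueSubfield L)
  refine ⟨ζ, hζL, ζ.2, ?_, fun l hl hl1 => ?_⟩
  · have hone := congrArg Subtype.val (FiniteField.pow_card_sub_one_eq_one _ hw0)
    rw [Nat.card_eq_fintype_card]
    exact (h.residue_eq_iff (x := ζ ^ _) (y := 1)).mp (by rw [map_pow, map_one]; exact hone)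
  · let l' : h.integers := ⟨l, hl1⟩
    by_cases hl0 : h.residue l' = 0
    · exact .inl (h.residue_eq_zero_iff.mp hl0)
    · obtain ⟨k, hk⟩ := hw ⟨_, l', hl, rfl⟩ fun heq => hl0 (congrArg Subtype.val heq)
      have hk' := congrArg Subtype.val hk
      refine .inr ⟨k, (h.residue_eq_iff (x := l') (y := ζ ^ k)).mp ?_⟩
      rw [map_pow]
      exact hk'.symm

lemma abv_cast_card_residueSubfield_lt_one (L : Subring B) :
    ρ (Nat.card (h.residueSubfield L) : B) < 1 := by
  cases nonempty_fintype (h.residueSubfield L)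
  have hcard := congrArg Subtype.val (FiniteField.cast_card_eq_zero (h.residueSubfield L))
  rw [← Nat.card_eq_fintype_card] at hcard
  exact (h.residue_eq_zero_iff (x := Nat.card (h.residueSubfield L))).mp
    (by rw [map_natCast]; exact hcard)

include h in
lemma exists_inResCentralizer_abv_sub_le {L : Subring B} {e r : ℕ}
    (hL : ∀ l ∈ L, ρ l < 1 → ρ l ≤ ρ π ^ e) (hr : r ≤ e) {x : B}
    (hx : inResCentralizer ρ L π r x) :
    ∃ y, ρ (y - x) ≤ ρ π ^ r ∧ inResCentralizer ρ L π e y := by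
  obtain ⟨ζ, hζL, hζ1, hroot, hζ⟩ := h.exists_residue_generator L
  set m := Nat.card (h.residueSubfield L) - 1
  have her : ρ π ^ e ≤ ρ π ^ r := pow_le_pow_of_le_one h.pos.le h.lt_one.le hr
  have hroot' : ρ x * ρ (ζ ^ m - 1) ≤ ρ π ^ e := by
    rw [← ρ.map_mul]
    exact abv_mul_le_left hx.1 (hL _ (sub_mem (pow_mem hζL m) L.one_mem) hroot)
  have hcast : ρ x * ρ (m + 1 : B) ≤ ρ π ^ r := by
    rw [← ρ.map_mul, ← Nat.cast_add_one, Nat.sub_add_cancel Nat.card_pos]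
    exact abv_mul_le_left hx.1
      ((hL _ (natCast_mem L _) (h.abv_cast_card_residueSubfield_lt_one L)).trans her)
  obtain ⟨y, hyx, hyζ⟩ := exists_abv_sub_le_and_abv_commutator_le h.isNonarchimedean hζ1
    (hx.2 ζ hζL hζ1) (hroot'.trans her) hcast
  have hy1 : ρ y ≤ 1 := by
    rw [← sub_add_cancel y x]
    exact (h.isNonarchimedean _ _).trans
      (max_le (hyx.trans (pow_le_one₀ h.pos.le h.lt_one.le)) hx.1)
  refine ⟨y, hyx, hy1, fun l hl hl1 => ?_⟩
  rcases hζ l hl hl1 with hl0 | ⟨k, hk⟩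
  · exact abv_commutator_le_of_abv_sub_le h.isNonarchimedean hy1 (z := 0)
      (by simpa using hL l hl hl0) (by simp [h.pos.le])
  · exact abv_commutator_le_of_abv_sub_le h.isNonarchimedean hy1
      (hL _ (sub_mem hl (pow_mem hζL k)) hk)
      (abv_commutator_pow_le h.isNonarchimedean hζ1 (hyζ.trans hroot') k)

include h in
lemma inResCentralizer_one {L : Subring B} {x : B} (hx : ρ x ≤ 1) :
    inResCentralizer ρ L π 1 x := by
  refine ⟨hx, fun l _ hl => ?_⟩
  rw [pow_one, ← h.abv_lt_one_iff]
  exact (h.residue_eq_iff (x := ⟨x, hx⟩ * ⟨l, hl⟩) (y := ⟨l, hl⟩ * ⟨x, hx⟩)).mp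
    (by rw [map_mul, map_mul, mul_comm])

lemma residueSubfield_mono {S S' : Subring B} (hS : S ≤ S') :
    h.residueSubfield S ≤ h.residueSubfield S' :=
  fun _ ⟨z, hz, hzx⟩ => ⟨z, hS hz, hzx⟩

lemma forall_abv_commutator_le_iff {L : Subring B} {u : Bˣ} {r : ℕ}
    (hu : ρ u = ρ π ^ r) :
    (∀ l ∈ L, ρ l ≤ 1 → ρ (u * l - l * u) ≤ ρ π ^ (r + 1)) ↔
      ∀ x ∈ h.residueSubfield L, h.residueConj u x = x := by
  constructor
  · rintro hL _ ⟨l, hl, rfl⟩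
    exact (h.abv_commutator_lt_iff u l).mp (hu ▸ h.abv_lt_pow_iff.mpr (hL l hl l.2))
  · intro hL l hl hl1
    rw [← h.abv_lt_pow_iff, ← hu]
    exact (h.abv_commutator_lt_iff u ⟨l, hl1⟩).mpr (hL _ ⟨⟨l, hl1⟩, hl, rfl⟩)

lemma residueConj_unit_pow_fixes_iff_finrank_dvd {L : Subring B} (hKL : Subring.center B ≤ L)
    {q f : ℕ} (hq : 1 < q) (hK : Nat.card (h.residueSubfield (Subring.center B)) = q)
    (hL : Nat.card (h.residueSubfield L) = q ^ f) (r : ℕ) :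
    (∀ x ∈ h.residueSubfield L, (h.residueConj h.unit ^ r) x = x) ↔ f ∣ r := by
  let E := Subfield.extendScalars (h.residueSubfield_mono hKL)
  have hE : Module.finrank (h.residueSubfield (Subring.center B)) E = f := by
    refine Nat.pow_right_injective hq ?_
    have := Module.natCard_eq_pow_finrank (K := h.residueSubfield (Subring.center B)) (V := E)
    rw [hK] at this
    exact this.symm.trans hL
  rw [← hE]
  exact forall_pow_apply_eq_iff_finrank_dvd h.zpowers_residueConj_unit E r

lemma exists_isChild_ne {L : Subring B} {e r : ℕ} (hL : ∀ l ∈ L, ρ l < 1 → ρ l ≤ ρ π ^ e)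
    (hr : r < e) (hfix : ∀ w ∈ h.residueSubfield L, (h.residueConj h.unit ^ r) w = w) {x : B}
    (hx : inResCentralizer ρ L π r x) :
    ∃ y z, isChild ρ L π r x y ∧ isChild ρ L π r x z ∧ ρ π ^ (r + 1) < ρ (y - z) := by
  obtain ⟨y, hyx, hy⟩ := h.exists_inResCentralizer_abv_sub_le hL hr.le hx
  have hy' : inResCentralizer ρ L π (r + 1) y := h.inResCentralizer_mono hr hy
  have hπr : inResCentralizer ρ L π (r + 1) (π ^ r) := by
    refine ⟨by simpa using pow_le_one₀ h.pos.le h.lt_one.le, ?_⟩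
    exact (h.forall_abv_commutator_le_iff (u := h.unit ^ r) (ρ.map_pow π r)).mpr
      (by rwa [map_pow])
  refine ⟨y, y + π ^ r, ⟨hyx, hy'⟩, ⟨?_, h.inResCentralizer_add hy' hπr⟩, ?_⟩
  · rw [add_sub_right_comm]
    exact (h.isNonarchimedean _ _).trans (max_le hyx (ρ.map_pow π r).le)
  · rw [sub_add_cancel_left, ρ.map_neg, ρ.map_pow]
    exact pow_lt_pow_right_of_lt_one₀ h.pos h.lt_one r.lt_succ_self

lemma forall_residueConj_eq_of_isChild_ne {L : Subring B} {r : ℕ} {x y z : B}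
    (hy : isChild ρ L π r x y) (hz : isChild ρ L π r x z) (hyz : ρ π ^ (r + 1) < ρ (y - z)) :
    ∀ w ∈ h.residueSubfield L, (h.residueConj h.unit ^ r) w = w := by
  have hle : ρ (y - z) ≤ ρ π ^ r := by
    rw [← sub_sub_sub_cancel_right y z x]
    exact abv_sub_le_of_le h.isNonarchimedean hy.1 hz.1
  have hpow : ρ (y - z) = ρ π ^ r :=
    hle.eq_of_not_lt fun hlt => hyz.not_ge (h.abv_lt_pow_iff.mp hlt)
  let u : Bˣ := Units.mk0 (y - z) (ρ.pos_iff.mp ((pow_pos h.pos _).trans hyz))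
  have hu : h.residueConj u = h.residueConj h.unit ^ r := by
    rw [← map_pow]
    exact h.residueConj_eq_of_abv_eq (hpow.trans (ρ.map_pow π r).symm)
  rw [← hu]
  refine (h.forall_abv_commutator_le_iff hpow).mp fun l hl hl1 => ?_
  have hsplit : (y - z) * l - l * (y - z) = (y * l - l * y) - (z * l - l * z) := by noncomm_ring
  exact hsplit ▸ abv_sub_le_of_le h.isNonarchimedean (hy.2.2 l hl hl1) (hz.2.2 l hl hl1)

end IsUniformizer

/-- Theorem 5.2 and its lemma: in the full rose FR(L) of a
division subalgebra L ⊆ B with e' = e(B/L) and f = f(L/K): every element of the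
residue field 𝔹 lifts to an element of ℂ_{e'}; every vertex whose level r
(1 ≤ r < e') is a positive multiple of f is a node (it has at least two distinct
lifts one level up), and no vertex whose level is not a multiple of f is a node
(its lift one level up is unique if it exists).  Hence FR(L) is the largest
(q^n − q^{e'}, e')-rose with nodes only at distances from the center divisible
by f. -/
theorem full_rose_structure
    (ρ : AbsoluteValue B ℝ) (hna : IsNonarchimedean ρ)
    (πB : B)
    (hπB : 0 < ρ πB ∧ ρ πB < 1 ∧ ∀ x : B, x ≠ 0 → ρ x < 1 → ρ x ≤ ρ πB)
    (hdisc : ∀ x : B, x ≠ 0 → ∃ k : ℤ, ρ x = ρ πB ^ k)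
    (q n f e' : ℕ) (hq : 2 ≤ q) (hn : 0 < n) (he' : 1 ≤ e')
    (hresK : resCard ρ (Subring.center B : Set B) = q)
    (hresB : resCard ρ (Set.univ : Set B) = q ^ n)
    -- L is a division subalgebra with residue degree f and e' = e(B/L)
    (L : Subring B) (hKL : Subring.center B ≤ L)
    (hLdiv : ∀ x ∈ L, x ≠ 0 → x⁻¹ ∈ L)
    (hresL : resCard ρ (L : Set B) = q ^ f)
    (πL : B) (hπLmem : πL ∈ L)
    (hπL : 0 < ρ πL ∧ ρ πL < 1 ∧ ∀ x ∈ L, ρ x < 1 → ρ x ≤ ρ πL)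
    (heBL : ρ πL = ρ πB ^ e') :
    -- (a) every element of 𝔹 lifts to ℂ_{e'}
    (∀ b : B, ρ b ≤ 1 → ∃ x : B, ρ (x - b) < 1 ∧ inResCentralizer ρ L πB e' x) ∧
    -- (b) nodes of the full rose occur exactly at levels divisible by f
    (∀ r : ℕ, 1 ≤ r → r < e' →
      ((f ∣ r → ∀ x : B, inResCentralizer ρ L πB r x →
          ∃ y z : B, isChild ρ L πB r x y ∧ isChild ρ L πB r x z ∧
            ρ πB ^ (r + 1) < ρ (y - z)) ∧
       (¬ f ∣ r → ∀ x : B, inResCentralizer ρ L πB r x →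
          ∀ y z : B, isChild ρ L πB r x y → isChild ρ L πB r x z →
            ρ (y - z) ≤ ρ πB ^ (r + 1)))) := by
  have h : IsUniformizer ρ πB := ⟨hna, hπB.1, hπB.2.1, fun x hx => by
    rcases eq_or_ne x 0 with rfl | hx0
    exacts [by simp, hπB.2.2 x hx0 hx]⟩
  have hcard : Nat.card h.ResidueField = q ^ n := h.card_residueField.trans hresB
  have : Finite h.ResidueField := Nat.finite_of_card_ne_zero (hcard ▸ by positivity)
  have hL : ∀ l ∈ L, ρ l < 1 → ρ l ≤ ρ πB ^ e' := heBL ▸ hπL.2.2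
  have hfix := h.residueConj_unit_pow_fixes_iff_finrank_dvd hKL hq
    ((h.card_residueSubfield _).trans hresK) ((h.card_residueSubfield L).trans hresL)
  refine ⟨fun b hb => ?_, fun r _ hr => ⟨fun hf x hx => ?_, fun hf x _ y z hy hz => ?_⟩⟩
  · obtain ⟨x, hxb, hx⟩ := h.exists_inResCentralizer_abv_sub_le hL he' (h.inResCentralizer_one hb)
    exact ⟨x, h.abv_lt_one_iff.mpr (by rwa [pow_one] at hxb), hx⟩
  · exact h.exists_isChild_ne hL hr ((hfix r).mpr hf) hx
  · exact not_lt.mp fun hlt => hf ((hfix r).mp (h.forall_residueConj_eq_of_isChild_ne hy hz hlt))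

end
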